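/- arXiv:1205.0309 — 3 statements merged into one kernel-verified Lean document; each statement's English description precedes it below -/
import Mathlib

section
/- Let X, Y ∈ ℝ^{n×d}, let U, V ∈ ℝ^{n×d} have orthonormal columns and Λ ∈ ℝ^{d×d} be diagonal with XYᵀ = UΛVᵀ, and let W ∈ ℝ^{d×d} be orthogonal and Δ ∈ ℝ^{d×d} be diagonal with YᵀY = WΔ²Wᵀ. Then (XWΔ)(XWΔ)ᵀ = (UΛ)(UΛ)ᵀ; consequently, for all indices i, j, the Euclidean distance between the i-th and j-th rows of XWΔ equals the Euclidean distance between the i-th and j-th rows of UΛ. -/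
/-!
Everything is governed by Gram matrices `A * Aᵀ`. Left multiplication respects equality of Gram
matrices, and `W * Δ` and `Yᵀ` share the Gram matrix `Yᵀ * Y`, so `X * W * Δ` and
`X * Yᵀ = U * Λ * Vᵀ` have the same one; the factor `Vᵀ`, whose rows are orthonormal, drops out of
it. By polarization the Gram matrix of `A` determines the distances between the rows of `A`.
-/

open Matrix

/-- The Euclidean distance between two vectors in `ℝ^d` (e.g. two rows of a matrix). -/
noncomputable def rowDist {d : ℕ} (a b : Fin d → ℝ) : ℝ :=
  Real.sqrt (∑ k, (a k - b k) ^ 2)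

section Gram

variable {l m n p R : Type*}

theorem mul_mul_transpose_mul [Fintype m] [Fintype n] [CommSemiring R]
    (A : Matrix l m R) (B : Matrix m n R) :
    (A * B) * (A * B)ᵀ = A * (B * Bᵀ) * Aᵀ := by
  simp only [transpose_mul, Matrix.mul_assoc]

theorem mul_mul_transpose_mul_congr [Fintype m] [Fintype n] [Fintype p] [CommSemiring R]
    (A : Matrix l m R) {B : Matrix m n R} {C : Matrix m p R} (h : B * Bᵀ = C * Cᵀ) :
    (A * B) * (A * B)ᵀ = (A * C) * (A * C)ᵀ := by
  rw [mul_mul_transpose_mul, h, mul_mul_transpose_mul]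

theorem mul_mul_transpose_mul_of_mul_transpose_eq_one [Fintype m] [DecidableEq m] [Fintype n]
    [CommSemiring R] (A : Matrix l m R) {B : Matrix m n R} (hB : B * Bᵀ = 1) :
    (A * B) * (A * B)ᵀ = A * Aᵀ := by
  rw [mul_mul_transpose_mul, hB, Matrix.mul_one]

theorem sum_sub_sq_eq_mul_transpose [Fintype n] [CommRing R] (A : Matrix m n R) (i j : m) :
    ∑ k, (A i k - A j k) ^ 2 = (A * Aᵀ) i i - 2 * (A * Aᵀ) i j + (A * Aᵀ) j j := by
  simp only [mul_apply, transpose_apply, Finset.mul_sum, ← Finset.sum_sub_distrib,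
    ← Finset.sum_add_distrib]
  exact Finset.sum_congr rfl fun k _ => by ring

end Gram

theorem rowDist_eq_of_mul_transpose_eq {m : Type*} {p q : ℕ} {A : Matrix m (Fin p) ℝ}
    {B : Matrix m (Fin q) ℝ} (h : A * Aᵀ = B * Bᵀ) (i j : m) :
    rowDist (A i) (A j) = rowDist (B i) (B j) := by
  simp only [rowDist, sum_sub_sq_eq_mul_transpose, h]

theorem stmt7_general {l m n : Type*} [Fintype m] [Fintype n] {p q : ℕ} {X : Matrix l m ℝ}
    {Y : Matrix n m ℝ} {P : Matrix l (Fin p) ℝ} {V : Matrix n (Fin p) ℝ} {Q : Matrix m (Fin q) ℝ}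
    (hXY : X * Yᵀ = P * Vᵀ) (hV : Vᵀ * V = 1) (hQ : Q * Qᵀ = Yᵀ * Y) :
    (X * Q) * (X * Q)ᵀ = P * Pᵀ ∧
      ∀ i j, rowDist ((X * Q) i) ((X * Q) j) = rowDist (P i) (P j) := by
  have hGram : (X * Q) * (X * Q)ᵀ = P * Pᵀ :=
    calc
      (X * Q) * (X * Q)ᵀ = (X * Yᵀ) * (X * Yᵀ)ᵀ :=
        mul_mul_transpose_mul_congr X (by rw [hQ, transpose_transpose])
      _ = (P * Vᵀ) * (P * Vᵀ)ᵀ := by rw [hXY]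
      _ = P * Pᵀ :=
        mul_mul_transpose_mul_of_mul_transpose_eq_one P (by rw [transpose_transpose, hV])
  exact ⟨hGram, rowDist_eq_of_mul_transpose_eq hGram⟩

/-- if `XYᵀ = UΛVᵀ` with `U`, `V` having orthonormal columns and `Λ` diagonal, and
`YᵀY = WΔ²Wᵀ` with `W` orthogonal and `Δ` diagonal, then `(XWΔ)(XWΔ)ᵀ = (UΛ)(UΛ)ᵀ`, and
consequently the distances between corresponding pairs of rows of `XWΔ` and `UΛ` agree. -/
theorem stmt7 {n d : ℕ} (X Y U V : Matrix (Fin n) (Fin d) ℝ)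
    (W Δ Λ : Matrix (Fin d) (Fin d) ℝ)
    (hU : Uᵀ * U = 1) (hV : Vᵀ * V = 1) (hΛ : Λ.IsDiag)
    (hSVD : X * Yᵀ = U * Λ * Vᵀ)
    (hW : Wᵀ * W = 1) (hW' : W * Wᵀ = 1) (hΔ : Δ.IsDiag)
    (hYY : Yᵀ * Y = W * (Δ * Δ) * Wᵀ) :
    (X * W * Δ) * (X * W * Δ)ᵀ = (U * Λ) * (U * Λ)ᵀ ∧
      ∀ i j, rowDist ((X * W * Δ) i) ((X * W * Δ) j) = rowDist ((U * Λ) i) ((U * Λ) j) := by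
  rw [Matrix.mul_assoc X W Δ]
  exact stmt7_general hSVD hV (by rw [mul_mul_transpose_mul, hΔ.isSymm.eq, hYY])
end

section
/- Let X, Y ∈ ℝ^{n×d}, let U, V ∈ ℝ^{n×d} have orthonormal columns and Λ ∈ ℝ^{d×d} be diagonal with nonnegative entries such that XYᵀ = UΛVᵀ. Suppose α, γ, β > 0 are such that every eigenvalue of YᵀY is at least αγn, every diagonal entry of Λ is at most n, and let i, j be indices with ‖X_{i,·} − X_{j,·}‖₂ ≥ β. Then ‖U_{i,·} − U_{j,·}‖₂ ≥ β·√(αγ/n). -/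
open Matrix

/-!
Put `x = X i - X j` and `u = U i - U j`. The difference of rows `i` and `j` of `X * Yᵀ = U * Λ * Vᵀ`
reads `Y x = V (u Λ)`. The eigenvalue bound on `Yᵀ * Y` gives `κ M ‖x‖² ≤ ‖Y x‖²`, while `V` is an
isometry and `Λ` stretches no vector by more than `M`, so `‖V (u Λ)‖² ≤ M² ‖u‖²`.
Comparing the two estimates yields `(κ / M) ‖x‖² ≤ ‖u‖²`.
-/

lemma rowDist_nonneg {d : ℕ} (a b : Fin d → ℝ) : 0 ≤ rowDist a b :=
  Real.sqrt_nonneg _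

lemma rowDist_sq {d : ℕ} (a b : Fin d → ℝ) : rowDist a b ^ 2 = (a - b) ⬝ᵥ (a - b) := by
  rw [rowDist, Real.sq_sqrt (by positivity)]
  simp only [dotProduct, Pi.sub_apply, sq]

section Eigenvalues

variable {n : Type*} [Fintype n] [DecidableEq n]

lemma mem_spectrum_iff_exists_mulVec_eq_smul {K : Type*} [Field K] {A : Matrix n n K} {μ : K} :
    μ ∈ spectrum K A ↔ ∃ v, v ≠ 0 ∧ A *ᵥ v = μ • v := by
  rw [← spectrum_toLin', ← Module.End.hasEigenvalue_iff_mem_spectrum]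
  constructor
  · intro h
    obtain ⟨v, hv⟩ := h.exists_hasEigenvector
    exact ⟨v, hv.2, hv.apply_eq_smul⟩
  · rintro ⟨v, hv, hAv⟩
    exact Module.End.hasEigenvalue_of_hasEigenvector
      (Module.End.hasEigenvector_iff.2 ⟨Module.End.mem_eigenspace_iff.2 hAv, hv⟩)

open scoped MatrixOrder ComplexOrder in
lemma mul_re_star_dotProduct_self_le_of_le_spectrum {𝕜 : Type*} [RCLike 𝕜] {A : Matrix n n 𝕜}
    (hA : A.IsHermitian) {c : ℝ} (hc : ∀ μ ∈ spectrum ℝ A, c ≤ μ) (x : n → 𝕜) :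
    c * RCLike.re (star x ⬝ᵥ x) ≤ RCLike.re (star x ⬝ᵥ A *ᵥ x) := by
  have hpos : (A - algebraMap ℝ _ c).PosSemidef :=
    le_iff.1 ((algebraMap_le_iff_le_spectrum (ha := hA)).2 hc)
  have hx := hpos.re_dotProduct_nonneg x
  rwa [Algebra.algebraMap_eq_smul_one, sub_mulVec, smul_mulVec, one_mulVec, dotProduct_sub,
    dotProduct_smul, map_sub, RCLike.smul_re, sub_nonneg] at hx

end Eigenvalues

section DotProduct

variable {m n p r R : Type*} [Fintype n]

lemma mulVec_dotProduct_mulVec_self [Fintype m] [CommSemiring R] (A : Matrix m n R) (x : n → R) :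
    A *ᵥ x ⬝ᵥ A *ᵥ x = x ⬝ᵥ (Aᵀ * A) *ᵥ x := by
  rw [← mulVec_mulVec, dotProduct_mulVec x, vecMul_transpose]

lemma vecMul_dotProduct_self_le_of_isDiag [CommRing R] [LinearOrder R] [IsStrictOrderedRing R]
    {D : Matrix n n R} (hD : D.IsDiag) {M : R} (hM : ∀ k, |D k k| ≤ M) (u : n → R) :
    u ᵥ* D ⬝ᵥ u ᵥ* D ≤ M ^ 2 * (u ⬝ᵥ u) := by
  classical
  rw [← hD.diagonal_diag, dotProduct, dotProduct, Finset.mul_sum]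
  refine Finset.sum_le_sum fun k _ => ?_
  have hk : D k k ^ 2 ≤ M ^ 2 := sq_le_sq' (neg_le_of_abs_le (hM k)) (le_of_abs_le (hM k))
  calc (u ᵥ* diagonal D.diag) k * (u ᵥ* diagonal D.diag) k = D k k ^ 2 * (u k * u k) := by
        rw [vecMul_diagonal, diag_apply]; ring
    _ ≤ M ^ 2 * (u k * u k) := mul_le_mul_of_nonneg_right hk (mul_self_nonneg _)

lemma mulVec_row_sub_of_mul_transpose_eq [Fintype r] [CommRing R] {X : Matrix m n R}
    {Y : Matrix p n R} {W : Matrix m r R} {V : Matrix p r R} (h : X * Yᵀ = W * Vᵀ) (i j : m) :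
    Y *ᵥ (X i - X j) = V *ᵥ (W i - W j) := by
  have hrow (k : m) : Y *ᵥ X k = V *ᵥ W k := by
    simpa only [mul_apply_eq_vecMul, vecMul_transpose] using congrFun h k
  rw [mulVec_sub, mulVec_sub, hrow, hrow]

end DotProduct

lemma mul_row_sub_dotProduct_self_le {m n p r : Type*} [Fintype n] [DecidableEq n] [Fintype p]
    [Fintype r] [DecidableEq r] {X : Matrix m n ℝ} {Y : Matrix p n ℝ} {U : Matrix m r ℝ}
    {V : Matrix p r ℝ} {D : Matrix r r ℝ} (hV : Vᵀ * V = 1) (hD : D.IsDiag)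
    (h : X * Yᵀ = U * D * Vᵀ) {c M : ℝ} (hc : ∀ μ ∈ spectrum ℝ (Yᵀ * Y), c ≤ μ)
    (hM : ∀ k, |D k k| ≤ M) (i j : m) :
    c * ((X i - X j) ⬝ᵥ (X i - X j)) ≤ M ^ 2 * ((U i - U j) ⬝ᵥ (U i - U j)) := by
  set x := X i - X j
  set u := U i - U j with hu
  have hYV : Y *ᵥ x = V *ᵥ (u ᵥ* D) := by
    rw [hu, sub_vecMul, ← mul_apply_eq_vecMul, ← mul_apply_eq_vecMul]
    exact mulVec_row_sub_of_mul_transpose_eq h i j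
  calc c * (x ⬝ᵥ x) ≤ x ⬝ᵥ (Yᵀ * Y) *ᵥ x :=
        mul_re_star_dotProduct_self_le_of_le_spectrum (isHermitian_conjTranspose_mul_self Y) hc x
    _ = V *ᵥ (u ᵥ* D) ⬝ᵥ V *ᵥ (u ᵥ* D) := by rw [← mulVec_dotProduct_mulVec_self, hYV]
    _ = u ᵥ* D ⬝ᵥ u ᵥ* D := by rw [mulVec_dotProduct_mulVec_self, hV, one_mulVec]
    _ ≤ M ^ 2 * (u ⬝ᵥ u) := vecMul_dotProduct_self_le_of_isDiag hD hM u

theorem stmt8_general {m p : Type*} [Fintype p] {d r : ℕ} {X : Matrix m (Fin d) ℝ}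
    {Y : Matrix p (Fin d) ℝ} {U : Matrix m (Fin r) ℝ} {V : Matrix p (Fin r) ℝ}
    {Λ : Matrix (Fin r) (Fin r) ℝ} (hV : Vᵀ * V = 1) (hΛdiag : Λ.IsDiag)
    (hSVD : X * Yᵀ = U * Λ * Vᵀ) {κ M : ℝ} (hκ : 0 ≤ κ) (hM : 0 < M)
    (hYY : ∀ (lam : ℝ) (v : Fin d → ℝ), v ≠ 0 → (Yᵀ * Y) *ᵥ v = lam • v → κ * M ≤ lam)
    (hΛub : ∀ k, |Λ k k| ≤ M) (i j : m) :
    rowDist (X i) (X j) * √(κ / M) ≤ rowDist (U i) (U j) := by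
  have hspec : ∀ μ ∈ spectrum ℝ (Yᵀ * Y), κ * M ≤ μ := fun μ hμ =>
    have ⟨v, hv, hμv⟩ := mem_spectrum_iff_exists_mulVec_eq_smul.1 hμ
    hYY μ v hv hμv
  have hsq : κ * M * rowDist (X i) (X j) ^ 2 ≤ M ^ 2 * rowDist (U i) (U j) ^ 2 := by
    simpa only [rowDist_sq] using mul_row_sub_dotProduct_self_le hV hΛdiag hSVD hspec hΛub i j
  refine le_of_sq_le_sq ?_ (rowDist_nonneg _ _)
  calc (rowDist (X i) (X j) * √(κ / M)) ^ 2 = κ * M * rowDist (X i) (X j) ^ 2 / M ^ 2 := by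
        rw [mul_pow, Real.sq_sqrt (by positivity)]
        field_simp
    _ ≤ rowDist (U i) (U j) ^ 2 := (div_le_iff₀' (by positivity)).2 hsq

/-- rows of `X` that are `β`-separated give rows of the left singular vector
matrix `U` of `XYᵀ` that are `β √(αγ/n)`-separated, when every eigenvalue of `YᵀY` is at least
`αγn` and every diagonal entry of `Λ` is at most `n`. -/
theorem stmt8 {n d : ℕ} (X Y U V : Matrix (Fin n) (Fin d) ℝ)
    (Λ : Matrix (Fin d) (Fin d) ℝ)
    (hU : Uᵀ * U = 1) (hV : Vᵀ * V = 1) (hΛdiag : Λ.IsDiag) (hΛnn : ∀ k, 0 ≤ Λ k k)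
    (hSVD : X * Yᵀ = U * Λ * Vᵀ)
    (α γ β : ℝ) (hα : 0 < α) (hγ : 0 < γ) (hβ : 0 < β)
    (hYY : ∀ (lam : ℝ) (v : Fin d → ℝ), v ≠ 0 → (Yᵀ * Y) *ᵥ v = lam • v → α * γ * n ≤ lam)
    (hΛub : ∀ k, Λ k k ≤ n)
    (i j : Fin n) (hij : β ≤ rowDist (X i) (X j)) :
    β * Real.sqrt (α * γ / n) ≤ rowDist (U i) (U j) :=
  (mul_le_mul_of_nonneg_right hij (Real.sqrt_nonneg _)).trans <| stmt8_general hV hΛdiag hSVD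
    (by positivity) (mod_cast i.pos) hYY (fun k => (abs_of_nonneg (hΛnn k)).trans_le (hΛub k)) i j
end

section
/- Let X, Y ∈ ℝ^{n×d}, let U, V ∈ ℝ^{n×d} have orthonormal columns, and let Λ ∈ ℝ^{d×d} be an invertible diagonal matrix such that XYᵀ = UΛVᵀ. Then for all indices i, j: if X_{i,·} = X_{j,·} then U_{i,·} = U_{j,·}, and if Y_{i,·} = Y_{j,·} then V_{i,·} = V_{j,·}. -/
open Matrix

/-! Multiplying `XYᵀ = UΛVᵀ` on the right by `VΛ⁻¹` gives `U = X(YᵀVΛ⁻¹)`, so each row of `U` is the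
image of the corresponding row of `X` under one fixed linear map. Multiplying on the left by `Λ⁻¹Uᵀ`
does the same for the columns of `Yᵀ` and `Vᵀ`. -/

section EqualRows

variable {m n p r R : Type*}

theorem row_mul_congr [Fintype p] [NonUnitalNonAssocSemiring R] {A : Matrix m p R}
    (C : Matrix p r R) {i j : m} (h : A.row i = A.row j) : (A * C).row i = (A * C).row j :=
  funext fun s ↦ congrArg (· ⬝ᵥ C.col s) h

theorem col_mul_congr [Fintype p] [NonUnitalNonAssocSemiring R] {B : Matrix p n R}
    (C : Matrix r p R) {k l : n} (h : B.col k = B.col l) : (C * B).col k = (C * B).col l :=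
  funext fun s ↦ congrArg (C.row s ⬝ᵥ ·) h

variable [Fintype p] [Fintype r] [DecidableEq r] [Semiring R]
  {A : Matrix m p R} {B : Matrix p n R} {C : Matrix m r R} {D : Matrix r n R}

theorem row_eq_of_mul_eq_mul [Fintype n] {D' : Matrix n r R} (h : A * B = C * D)
    (hD : D * D' = 1) {i j : m} (hij : A.row i = A.row j) : C.row i = C.row j := by
  have hC : A * (B * D') = C := by
    rw [← Matrix.mul_assoc, h, Matrix.mul_assoc, hD, Matrix.mul_one]
  exact hC ▸ row_mul_congr (B * D') hij

theorem col_eq_of_mul_eq_mul [Fintype m] {C' : Matrix r m R} (h : A * B = C * D)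
    (hC : C' * C = 1) {k l : n} (hkl : B.col k = B.col l) : D.col k = D.col l := by
  have hD : C' * A * B = D := by
    rw [Matrix.mul_assoc, h, ← Matrix.mul_assoc, hC, Matrix.one_mul]
  exact hD ▸ col_mul_congr (C' * A) hkl

theorem stmt18_general [Fintype m] [Fintype n] {X : Matrix m p R} {Y : Matrix n p R}
    {U : Matrix m r R} {V : Matrix n r R} {Λ : Matrix r r R}
    {U' : Matrix r m R} {V' : Matrix n r R} (hU : U' * U = 1) (hV : Vᵀ * V' = 1)
    (hΛ : IsUnit Λ) (h : X * Yᵀ = U * Λ * Vᵀ) :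
    (∀ i j, X i = X j → U i = U j) ∧ (∀ k l, Y k = Y l → V k = V l) := by
  obtain ⟨Λ', hΛΛ', hΛ'Λ⟩ := isUnit_iff_exists.mp hΛ
  have hΛV : Λ * Vᵀ * (V' * Λ') = 1 := by
    rw [Matrix.mul_assoc, ← Matrix.mul_assoc Vᵀ, hV, Matrix.one_mul, hΛΛ']
  have hUΛ : Λ' * U' * (U * Λ) = 1 := by
    rw [Matrix.mul_assoc, ← Matrix.mul_assoc U', hU, Matrix.one_mul, hΛ'Λ]
  exact ⟨fun _ _ ↦ row_eq_of_mul_eq_mul (h.trans (Matrix.mul_assoc U Λ Vᵀ)) hΛV,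
    fun _ _ ↦ col_eq_of_mul_eq_mul h hUΛ⟩

end EqualRows

/-- if `XYᵀ = UΛVᵀ` with `U`, `V` having orthonormal columns and `Λ` an invertible
diagonal matrix, then equal rows of `X` give equal rows of `U`, and equal rows of `Y` give equal
rows of `V`. -/
theorem stmt18 {n d : ℕ} (X Y U V : Matrix (Fin n) (Fin d) ℝ)
    (Λ : Matrix (Fin d) (Fin d) ℝ)
    (hU : Uᵀ * U = 1) (hV : Vᵀ * V = 1)
    (hΛdiag : Λ.IsDiag) (hΛinv : IsUnit Λ.det)
    (hSVD : X * Yᵀ = U * Λ * Vᵀ) (i j : Fin n) :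
    (X i = X j → U i = U j) ∧ (Y i = Y j → V i = V j) :=
  have h := stmt18_general hU hV (Λ.isUnit_iff_isUnit_det.mpr hΛinv) hSVD
  ⟨h.1 i j, h.2 i j⟩
end
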